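/- The iterated integral ∫₀^{1/4} ∫₀^{√3·x₁} (4/√3)·((x₁ − 7/24)² + (x₂ − 7/(24√3))²) dx₂ dx₁ + ∫_{1/4}^{1/2} ∫₀^{(1−x₁)/√3} (4/√3)·((x₁ − 7/24)² + (x₂ − 7/(24√3))²) dx₂ dx₁ equals 11/1296; i.e., the contribution of the Voronoi region of the point (7/24, 7/(24√3)) to the three-means distortion is 11/1296. -/

import Mathlib

/-!
Integrating along vertical fibers, the second moment about `(a, b)` of the region under a graph
`y = f x` has the density `(x - a) ^ 2 * f x + ((f x - b) ^ 3 + b ^ 3) / 3`, a polynomial of degree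
at most three in `x` when `f` is affine. Simpson's rule is exact for such polynomials, so on each
side of `x₁ = 1 / 4` the Voronoi region only needs this density at the two end points and at the
midpoint.
-/

open intervalIntegral Polynomial

/-- The value that Simpson's rule assigns to the integral of `f` from `p` to `q`. -/
noncomputable def simpsonRule (f : ℝ → ℝ) (p q : ℝ) : ℝ :=
  (q - p) / 6 * (f p + 4 * f ((p + q) / 2) + f q)

theorem integral_eval_eq_simpsonRule {P : ℝ[X]} (hP : P.natDegree ≤ 3) (p q : ℝ) :
    ∫ x in p..q, P.eval x = simpsonRule P.eval p q := by
  have eval_eq (x : ℝ) : P.eval x = ∑ i ∈ Finset.range 4, P.coeff i * x ^ i :=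
    P.eval_eq_sum_range' (Nat.lt_succ_of_le hP) x
  have monomial_intervalIntegrable (i : ℕ) :
      IntervalIntegrable (fun x ↦ P.coeff i * x ^ i) MeasureTheory.volume p q :=
    (by fun_prop : Continuous fun x : ℝ ↦ P.coeff i * x ^ i).intervalIntegrable p q
  simp only [simpsonRule, eval_eq]
  rw [integral_finsetSum fun i _ ↦ monomial_intervalIntegrable i]
  simp only [integral_const_mul, integral_pow, Finset.sum_range_succ, Finset.sum_range_zero]
  push_cast
  ring

theorem integral_const_add_sub_sq (c b p q : ℝ) :
    ∫ y in p..q, (c + (y - b) ^ 2) = c * (q - p) + ((q - b) ^ 3 - (p - b) ^ 3) / 3 := by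
  rw [integral_add (by simp) ((by fun_prop : Continuous _).intervalIntegrable p q),
    integral_const, integral_comp_sub_right (fun y ↦ y ^ 2), integral_pow, smul_eq_mul]
  push_cast
  ring

/-- The second moment about `(a, b)` of the region between the horizontal axis and the graph of `f`
over `[p, q]`, for the Lebesgue measure. As an iterated interval integral it is signed: parts of
the region below the axis count negatively, and exchanging `p` and `q` changes the sign. -/
noncomputable def subgraphSecondMoment (a b : ℝ) (f : ℝ → ℝ) (p q : ℝ) : ℝ :=
  ∫ x in p..q, ∫ y in (0 : ℝ)..f x, ((x - a) ^ 2 + (y - b) ^ 2)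

/-- The density on the horizontal axis of the second moment about `(a, b)` of the region under the
graph of `f`, obtained by integrating over the vertical fibre at `x`. -/
noncomputable def fiberSecondMoment (a b : ℝ) (f : ℝ → ℝ) (x : ℝ) : ℝ :=
  (x - a) ^ 2 * f x + ((f x - b) ^ 3 + b ^ 3) / 3

theorem subgraphSecondMoment_eq_integral_fiberSecondMoment (a b : ℝ) (f : ℝ → ℝ) (p q : ℝ) :
    subgraphSecondMoment a b f p q = ∫ x in p..q, fiberSecondMoment a b f x := by
  refine integral_congr fun x _ ↦ ?_
  rw [integral_const_add_sub_sq, fiberSecondMoment]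
  ring

theorem subgraphSecondMoment_affine {f : ℝ → ℝ} {m n : ℝ} (hf : ∀ x, f x = m * x + n)
    (a b p q : ℝ) :
    subgraphSecondMoment a b f p q = simpsonRule (fiberSecondMoment a b f) p q := by
  let P : ℝ[X] := (X - C a) ^ 2 * (C m * X + C n) +
    C (1 / 3) * ((C m * X + C n - C b) ^ 3 + C (b ^ 3))
  have natDegree_le : P.natDegree ≤ 3 := by
    unfold P
    compute_degree
  have eval_eq : P.eval = fiberSecondMoment a b f := by
    funext x
    simp only [P, fiberSecondMoment, hf, eval_add, eval_mul, eval_sub, eval_pow, eval_X, eval_C]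
    ring
  rw [subgraphSecondMoment_eq_integral_fiberSecondMoment, ← eval_eq,
    integral_eval_eq_simpsonRule natDegree_le]

theorem subgraphSecondMoment_sqrt_three_mul :
    subgraphSecondMoment (7 / 24) (7 / (24 * √3)) (fun x ↦ √3 * x) 0 (1 / 4) =
      √3 / 4 * (13 / 3456) := by
  rw [subgraphSecondMoment_affine (m := √3) (n := 0) fun x ↦ (add_zero _).symm]
  set g := fiberSecondMoment (7 / 24) (7 / (24 * √3)) fun x ↦ √3 * x with hg
  have sq_sqrt_three : √3 ^ 2 = 3 := Real.sq_sqrt (by norm_num)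
  have left_value : g 0 = 0 := by
    rw [hg, fiberSecondMoment]
    ring
  have midpoint_value : g ((0 + 1 / 4) / 2) = √3 / 4 * (61 / 3456) := by
    rw [hg, fiberSecondMoment]
    field_simp
    grind
  have right_value : g (1 / 4) = √3 / 4 * (17 / 864) := by
    rw [hg, fiberSecondMoment]
    field_simp
    grind
  rw [simpsonRule, left_value, midpoint_value, right_value]
  ring

theorem subgraphSecondMoment_one_sub_div_sqrt_three :
    subgraphSecondMoment (7 / 24) (7 / (24 * √3)) (fun x ↦ (1 - x) / √3) (1 / 4) (1 / 2) =
      √3 / 4 * (49 / 10368) := by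
  rw [subgraphSecondMoment_affine (m := -(1 / √3)) (n := 1 / √3) fun x ↦ by ring]
  set g := fiberSecondMoment (7 / 24) (7 / (24 * √3)) fun x ↦ (1 - x) / √3 with hg
  have sq_sqrt_three : √3 ^ 2 = 3 := Real.sq_sqrt (by norm_num)
  have left_value : g (1 / 4) = √3 / 4 * (17 / 864) := by
    rw [hg, fiberSecondMoment]
    field_simp
    grind
  have midpoint_value : g ((1 / 4 + 1 / 2) / 2) = √3 / 4 * (155 / 10368) := by
    rw [hg, fiberSecondMoment]
    field_simp
    grind
  have right_value : g (1 / 2) = √3 / 4 * (11 / 324) := by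
    rw [hg, fiberSecondMoment]
    field_simp
    grind
  rw [simpsonRule, left_value, midpoint_value, right_value]
  ring

theorem voronoi_region_integral :
    (∫ x₁ in (0:ℝ)..(1/4), ∫ x₂ in (0:ℝ)..(Real.sqrt 3 * x₁),
        (4 / Real.sqrt 3) * ((x₁ - 7/24) ^ 2 + (x₂ - 7 / (24 * Real.sqrt 3)) ^ 2)) +
    (∫ x₁ in (1/4:ℝ)..(1/2), ∫ x₂ in (0:ℝ)..((1 - x₁) / Real.sqrt 3),
        (4 / Real.sqrt 3) * ((x₁ - 7/24) ^ 2 + (x₂ - 7 / (24 * Real.sqrt 3)) ^ 2)) =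
    11 / 1296 := by
  simp only [integral_const_mul]
  calc
    4 / √3 * subgraphSecondMoment (7 / 24) (7 / (24 * √3)) (fun x ↦ √3 * x) 0 (1 / 4) +
        4 / √3 * subgraphSecondMoment (7 / 24) (7 / (24 * √3))
          (fun x ↦ (1 - x) / √3) (1 / 4) (1 / 2)
      = 4 / √3 * (√3 / 4 * (13 / 3456)) + 4 / √3 * (√3 / 4 * (49 / 10368)) := by
        rw [subgraphSecondMoment_sqrt_three_mul, subgraphSecondMoment_one_sub_div_sqrt_three]
    _ = 11 / 1296 := by
        field_simp
        norm_num
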